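/- arXiv:2402.15574 — 2 statements merged into one kernel-verified Lean document; each statement's English description precedes it below -/
import Mathlib

section
/- Let (M, Ω, V) be a graded von Neumann algebra with modular conjugation J. Then: (i) if x ∈ Z(M, V) has polar decomposition x = u|x|, then the partial isometry u lies in Z(M, V) and |x| lies in Z(M)^γ; (ii) if Ad_V is an inner action on M, i.e. there exists a unitary u ∈ M with V y V = u y u* for all y ∈ M, then Z(M, V) = u · Z(M). -/
open scoped InnerProductSpace ComplexOrder

noncomputable section

variable {H : Type*} [NormedAddCommGroup H] [InnerProductSpace ℂ H] [CompleteSpace H]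

/-- A graded von Neumann algebra in standard form: a von Neumann algebra `M` with a cyclic
and separating vector `Ω`, the associated modular data `(J, Δ^{it})` (characterized by the
Tomita-Takesaki relations below), and a `ℤ₂`-grading `V`. -/
structure GradedVN (H : Type*) [NormedAddCommGroup H] [InnerProductSpace ℂ H]
    [CompleteSpace H] where
  M : VonNeumannAlgebra H
  Ω : H
  cyclic : Dense {ξ : H | ∃ x ∈ M, x Ω = ξ}
  separating : ∀ x ∈ M, x Ω = 0 → x = 0
  /-- the modular conjugation (an antiunitary involution) -/
  J : H → H
  J_add : ∀ ξ η, J (ξ + η) = J ξ + J η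
  J_smul : ∀ (c : ℂ) (ξ), J (c • ξ) = starRingEnd ℂ c • J ξ
  J_inner : ∀ ξ η, ⟪J ξ, J η⟫_ℂ = ⟪η, ξ⟫_ℂ
  J_invol : ∀ ξ, J (J ξ) = ξ
  J_Ω : J Ω = Ω
  /-- the modular group `Δ^{it}` -/
  U : ℝ → H ≃ₗᵢ[ℂ] H
  U_zero : ∀ ξ, U 0 ξ = ξ
  U_add : ∀ s t ξ, U (s + t) ξ = U s (U t ξ)
  U_cont : ∀ ξ, Continuous fun t : ℝ => U t ξ
  U_Ω : ∀ t, U t Ω = Ω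
  J_U : ∀ t ξ, J (U t ξ) = U t (J ξ)
  flow_mem : ∀ t : ℝ, ∀ x ∈ M, ∃ y ∈ M, ∀ ξ, y ξ = U t (x (U (-t) ξ))
  /-- `J M J ⊆ M'` -/
  tomita : ∀ x ∈ M, ∀ y ∈ M, ∀ ξ, J (x (J (y ξ))) = y (J (x (J ξ)))
  /-- `S = J Δ^{1/2}` maps `xΩ` to `x*Ω`, expressed via analytic continuation of the
  modular group. -/
  S_cond : ∀ x ∈ M, ∀ f : ℂ → H, Differentiable ℂ f → (∀ t : ℝ, f (t : ℂ) = U t (x Ω)) →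
    J (f (-(Complex.I) / 2)) = star x Ω
  /-- the grading -/
  V : H →L[ℂ] H
  V_star : star V = V
  V_invol : ∀ ξ, V (V ξ) = ξ
  V_Ω : V Ω = Ω
  V_mem : ∀ x ∈ M, ∃ y ∈ M, ∀ ξ, y ξ = V (x (V ξ))

namespace GradedVN

variable (N : GradedVN H)

/-- The `V`-twisted center `Z(M, V) = {x ∈ M | J x* J = x V}`. -/
def twistedCenter : Set (H →L[ℂ] H) :=
  {x | x ∈ N.M ∧ ∀ ξ, N.J (star x (N.J ξ)) = x (N.V ξ)}

/-- The center `Z(M)` of `M`. -/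
def centerSet : Set (H →L[ℂ] H) :=
  {z | z ∈ N.M ∧ ∀ y ∈ N.M, z * y = y * z}

/-- The `Ad_V`-fixed points `M^γ`. -/
def gammaFixed : Set (H →L[ℂ] H) :=
  {x | x ∈ N.M ∧ ∀ ξ, N.V (x (N.V ξ)) = x ξ}

/-- The fixed points `M^α` of the modular flow. -/
def flowFixed : Set (H →L[ℂ] H) :=
  {x | x ∈ N.M ∧ ∀ (t : ℝ) (ξ), x (N.U t ξ) = N.U t (x ξ)}

/-- The centralizer `Z_Ω(M)`. -/
def centralizerSet : Set (H →L[ℂ] H) :=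
  {x | x ∈ N.M ∧ ∀ y ∈ N.M, ⟪N.Ω, x (y N.Ω)⟫_ℂ = ⟪N.Ω, y (x N.Ω)⟫_ℂ}

/-- The twisted center of the reduced algebra `(M_p, V_p)` for a central `Ad_V`-invariant
projection `p` (for such `p`, the modular conjugation of `(pMp, pΩ)` is `J` restricted
to `pH`, so the relative twisted center consists of the `p`-supported elements of `M`
satisfying the twisted-center relation). -/
def tcRel (p : H →L[ℂ] H) : Set (H →L[ℂ] H) :=
  {x | x ∈ N.M ∧ x * p = x ∧ p * x = x ∧ ∀ ξ, N.J (star x (N.J ξ)) = x (N.V ξ)}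

/-- `p` is an `Ad_V`-invariant central projection. -/
def IsCentralInvProj (p : H →L[ℂ] H) : Prop :=
  p ∈ N.centerSet ∧ star p = p ∧ p * p = p ∧ ∀ ξ, N.V (p (N.V ξ)) = p ξ

/-- `p` is an `Ad_V`-invariant central projection carrying a partial isometry in the
relative twisted center which is unitary on `pH`. -/
def HasPI (p : H →L[ℂ] H) : Prop :=
  N.IsCentralInvProj p ∧ ∃ u ∈ N.tcRel p, star u * u = p ∧ u * star u = p

/-- Asymptotically abelian modular flow: `[α_t(x), y] → 0` weakly as `t → ∞`. -/
def AsympAbelian : Prop :=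
  ∀ x ∈ N.M, ∀ y ∈ N.M, ∀ ξ η : H,
    Filter.Tendsto
      (fun t : ℝ => ⟪ξ, N.U t (x (N.U (-t) (y η))) - y (N.U t (x (N.U (-t) η)))⟫_ℂ)
      Filter.atTop (nhds 0)

/-- `V`-graded asymptotically abelian modular flow:
`[α_t(x), y]_V = α_t(x) y − (V y V) α_t(x) → 0` weakly as `t → ∞`. -/
def GradedAsympAbelian : Prop :=
  ∀ x ∈ N.M, ∀ y ∈ N.M, ∀ ξ η : H,
    Filter.Tendsto
      (fun t : ℝ =>
        ⟪ξ, N.U t (x (N.U (-t) (y η))) - N.V (y (N.V (N.U t (x (N.U (-t) η)))))⟫_ℂ)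
      Filter.atTop (nhds 0)

end GradedVN


theorem aux_identity {E : Type*} [NormedAddCommGroup E] [NormedSpace ℂ E] [CompleteSpace E]
    {f g : ℂ → E} (hf : Differentiable ℂ f) (hg : Differentiable ℂ g)
    (h : ∀ t : ℝ, f t = g t) : f = g := by
  have hf' : AnalyticOnNhd ℂ f Set.univ := fun z _ => hf.analyticAt z
  have hg' : AnalyticOnNhd ℂ g Set.univ := fun z _ => hg.analyticAt z
  refine hf'.eq_of_frequently_eq (z₀ := 0) hg' ?_
  have h1 : Filter.Tendsto (fun n : ℕ => ((1 / ((n : ℝ) + 1) : ℝ) : ℂ)) Filter.atTop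
      (nhdsWithin 0 {0}ᶜ) := by
    refine tendsto_nhdsWithin_iff.2 ⟨?_, ?_⟩
    · have := (Complex.continuous_ofReal.tendsto 0).comp
        (tendsto_one_div_add_atTop_nhds_zero_nat (𝕜 := ℝ))
      rw [Complex.ofReal_zero] at this
      exact this
    · refine Filter.Eventually.of_forall fun n => ?_
      have : (1 / ((n : ℝ) + 1) : ℝ) ≠ 0 := by positivity
      simpa using (Complex.ofReal_ne_zero.2 this)
  exact h1.frequently (Filter.Frequently.of_forall fun n => h _)

theorem aux_liouville (U : ℝ → H ≃ₗᵢ[ℂ] H) (_ : ∀ ξ, U 0 ξ = ξ)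
    (U_add : ∀ s t ξ, U (s + t) ξ = U s (U t ξ))
    (f : ℂ → H) (hf : Differentiable ℂ f) (hfU : ∀ t : ℝ, f t = U t (f 0))
    (hG : ∀ t : ℝ, ⟪f 0, f t⟫_ℂ = ⟪f (-Complex.I / 2), f (t + -Complex.I / 2)⟫_ℂ)
    (t : ℝ) : U t (f 0) = f 0 := by
  have hshift : ∀ (t : ℝ) (z : ℂ), f (z + t) = U t (f z) := by
    intro t
    refine congrFun (aux_identity (f := fun z => f (z + t)) (g := fun z => U t (f z)) ?_ ?_ ?_)
    · fun_prop
    · exact (U t).toContinuousLinearEquiv.toContinuousLinearMap.differentiable.comp hf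
    · intro s
      show f (s + t) = U t (f s)
      rw [hfU s, ← U_add, add_comm t s, ← hfU]
      simp
  have hL : ∀ a b : ℂ, ⟪f (starRingEnd ℂ a), f b⟫_ℂ = ⟪f 0, f (b - a)⟫_ℂ := by
    intro a b
    refine congrFun (aux_identity (f := fun a => ⟪f (starRingEnd ℂ a), f b⟫_ℂ)
      (g := fun a => ⟪f 0, f (b - a)⟫_ℂ) ?_ ?_ ?_) a
    · intro a
      have h1 : Differentiable ℂ (fun z => ⟪f b, f z⟫_ℂ) :=
        (innerSL ℂ (f b)).differentiable.comp hf
      have h3 := DifferentiableAt.conj_conj (𝕜 := ℂ) (h1 (starRingEnd ℂ a))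
      rw [Complex.conj_conj] at h3
      refine h3.congr_of_eventuallyEq (Filter.Eventually.of_forall fun z => ?_)
      simp
    · exact (innerSL ℂ (f 0)).differentiable.comp (by fun_prop)
    · intro s
      have h1 : f b = U s (f (b - s)) := by rw [← hshift]; simp
      show ⟪f (starRingEnd ℂ s), f b⟫_ℂ = ⟪f 0, f (b - s)⟫_ℂ
      rw [Complex.conj_ofReal, hfU s, h1, LinearIsometryEquiv.inner_map_map]
  set G : ℂ → ℂ := fun z => ⟪f 0, f z⟫_ℂ with hGdef
  have hGd : Differentiable ℂ G := (innerSL ℂ (f 0)).differentiable.comp hf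
  have hper : Function.Periodic G Complex.I := by
    intro z
    have := congrFun (aux_identity (f := G) (g := fun z => G (z - Complex.I)) hGd
      (by fun_prop) ?_) (z + Complex.I)
    · simpa using this
    · intro s
      have h1 := hL (Complex.I / 2) (s + -Complex.I / 2)
      have h2 : starRingEnd ℂ (Complex.I / 2) = -Complex.I / 2 := by
        rw [map_div₀, Complex.conj_I, Complex.conj_ofNat]
      rw [h2, ← hG] at h1
      show ⟪f 0, f s⟫_ℂ = ⟪f 0, f (s - Complex.I)⟫_ℂ
      rw [h1]
      congr 2
      ring
  have hbdd : Bornology.IsBounded (Set.range G) := by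
    have hcont : Continuous fun s : ℝ => ‖f (s * Complex.I)‖ := by
      have := hf.continuous
      fun_prop
    obtain ⟨C, hC⟩ := (isCompact_Icc (a := (0:ℝ)) (b := 1)).bddAbove_image hcont.continuousOn
    refine isBounded_iff_forall_norm_le.2 ⟨‖f 0‖ * C, ?_⟩
    rintro _ ⟨z, rfl⟩
    have h1 : G z = G (Int.fract z.im * Complex.I + z.re) := by
      rw [← hper.sub_zsmul_eq ⌊z.im⌋]
      congr 1
      rw [← Int.self_sub_floor, zsmul_eq_mul]
      push_cast
      linear_combination (-1 : ℂ) * Complex.re_add_im z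
    rw [h1]
    refine (norm_inner_le_norm _ _).trans ?_
    gcongr
    rw [hshift, LinearIsometryEquiv.norm_map]
    exact hC ⟨_, ⟨Int.fract_nonneg _, (Int.fract_lt_one _).le⟩, rfl⟩
  have hc := hGd.apply_eq_apply_of_bounded hbdd t 0
  simp only [hGdef] at hc
  rw [hfU t] at hc
  rw [← sub_eq_zero, ← norm_eq_zero, ← sq_eq_zero_iff, @norm_sub_sq ℂ, ← inner_conj_symm, hc]
  rw [LinearIsometryEquiv.norm_map, inner_self_eq_norm_sq_to_K]
  have h9 : RCLike.re ((starRingEnd ℂ) ((‖f 0‖ : ℂ) ^ 2)) = ‖f 0‖ ^ 2 := by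
    rw [← Complex.ofReal_pow, Complex.conj_ofReal]; rfl
  refine (congrArg (fun r : ℝ => ‖f 0‖ ^ 2 - 2 * r + ‖f 0‖ ^ 2) h9).trans ?_
  ring

section AuxMeasure

open MeasureTheory


theorem aux_gauss_bound (R s : ℝ) : 
    2 * |s| * Real.exp (2 * |s| * R - s ^ 2) ≤ 
      2 * Real.exp ((1 + 2 * R) ^ 2 / 2) * Real.exp (- (1/2) * s ^ 2) := by
  have h1 : |s| ≤ Real.exp |s| := by linarith [Real.add_one_le_exp |s|]
  calc 2 * |s| * Real.exp (2 * |s| * R - s ^ 2) 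
      ≤ 2 * Real.exp |s| * Real.exp (2 * |s| * R - s ^ 2) := by gcongr
    _ = 2 * Real.exp (|s| + (2 * |s| * R - s ^ 2)) := by rw [Real.exp_add]; ring
    _ ≤ 2 * Real.exp ((1 + 2 * R) ^ 2 / 2 + - (1/2) * s ^ 2) := by
      refine mul_le_mul_of_nonneg_left (Real.exp_le_exp.2 ?_) (by norm_num)
      rw [← sq_abs s]
      nlinarith [sq_nonneg (|s| - (1 + 2 * R))]
    _ = _ := by rw [Real.exp_add]; ring

theorem aux_gauss_bound' (R s : ℝ) : 
    Real.exp (2 * |s| * R - s ^ 2) ≤ 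
      Real.exp ((2 * R) ^ 2 / 2) * Real.exp (- (1/2) * s ^ 2) := by
  rw [← Real.exp_add]
  refine Real.exp_le_exp.2 ?_
  rw [← sq_abs s]
  nlinarith [sq_nonneg (|s| - (2 * R))]

theorem aux_norm_cexp (z : ℂ) (s R : ℝ) (hz : ‖z‖ ≤ R) : 
    ‖Complex.exp (2 * s * z - s ^ 2)‖ ≤ Real.exp (2 * |s| * R - s ^ 2) := by
  rw [Complex.norm_exp]
  gcongr
  have h1 : (2 * (s:ℂ) * z - (s:ℂ) ^ 2).re = 2 * (s * z.re) - s ^ 2 := by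
    rw [← Complex.ofReal_pow, Complex.sub_re, Complex.ofReal_re, mul_assoc, mul_left_comm, Complex.re_ofReal_mul]
    simp
    ring
  rw [h1]
  have h2 : s * z.re ≤ |s| * R := by
    refine (le_abs_self _).trans ?_
    rw [abs_mul]
    gcongr
    exact (Complex.abs_re_le_norm z).trans hz
  linarith

theorem aux_gauss_diff (W : ℝ → H) (hW : Continuous W) (C : ℝ) (hC : ∀ s, ‖W s‖ ≤ C) :
    Differentiable ℂ fun z : ℂ => ∫ s : ℝ, Complex.exp (2 * s * z - s ^ 2) • W s := by
  intro z₀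
  have hC0 : 0 ≤ C := (norm_nonneg _).trans (hC 0)
  refine (hasDerivAt_integral_of_dominated_loc_of_deriv_le (s := Metric.ball z₀ 1)
    (F' := fun z s => (2 * (s:ℂ) * Complex.exp (2 * s * z - s ^ 2)) • W s)
    (bound := fun s => 2 * Real.exp ((1 + 2 * (‖z₀‖ + 1)) ^ 2 / 2) * Real.exp (- (1/2) * s ^ 2) * C)
    (Metric.ball_mem_nhds _ one_pos) ?_ ?_ ?_ ?_ ?_ ?_).2.differentiableAt
  · refine Filter.Eventually.of_forall fun z => Continuous.aestronglyMeasurable ?_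
    fun_prop
  · refine Integrable.mono' (g := fun s => Real.exp ((2 * ‖z₀‖) ^ 2 / 2) * Real.exp (- (1/2) * s ^ 2) * C) ?_ (Continuous.aestronglyMeasurable (by fun_prop)) ?_
    · exact ((integrable_exp_neg_mul_sq (by norm_num)).const_mul _).mul_const _
    · refine Filter.Eventually.of_forall fun s => ?_
      rw [norm_smul]
      exact mul_le_mul ((aux_norm_cexp _ _ _ le_rfl).trans (aux_gauss_bound' _ _)) (hC s)
        (norm_nonneg _) (by positivity)
  · exact Continuous.aestronglyMeasurable (by fun_prop)
  · refine Filter.Eventually.of_forall fun s z hz => ?_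
    rw [norm_smul, norm_mul]
    refine mul_le_mul (le_trans ?_ (aux_gauss_bound _ _)) (hC s)
        (norm_nonneg _) (by positivity)
    have h1 : ‖(2 * (s:ℂ))‖ = 2 * |s| := by simp
    rw [h1]
    gcongr
    refine aux_norm_cexp _ _ _ ?_
    have h2 : ‖z - z₀‖ < 1 := by simpa [dist_eq_norm] using hz
    have h3 := norm_add_le z₀ (z - z₀)
    simp only [add_sub_cancel] at h3
    linarith
  · exact ((integrable_exp_neg_mul_sq (by norm_num)).const_mul _).mul_const _
  · refine Filter.Eventually.of_forall fun s z hz => ?_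
    have h1 : HasDerivAt (fun z : ℂ => 2 * (s:ℂ) * z - (s:ℂ)^2) (2 * (s:ℂ)) z := by
      simpa using ((hasDerivAt_id z).const_mul (2 * (s:ℂ))).sub_const ((s:ℂ)^2)
    have h2 := h1.cexp.smul_const (W s)
    rwa [mul_comm (Complex.exp _)] at h2

theorem aux_gauss_int (W : ℝ → H) (hW : Continuous W) (C : ℝ) (hC : ∀ s, ‖W s‖ ≤ C) :
    Integrable fun s : ℝ => Real.exp (-1 * s ^ 2) • W s := by
  refine Integrable.mono' (g := fun s => Real.exp (-1 * s ^ 2) * C) 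
    ((integrable_exp_neg_mul_sq (by norm_num)).mul_const _) 
    (Continuous.aestronglyMeasurable (by fun_prop)) ?_
  refine Filter.Eventually.of_forall fun s => ?_
  rw [norm_smul, Real.norm_eq_abs, abs_of_pos (Real.exp_pos _)]
  gcongr
  exact hC s

/-- entire extension of the Gaussian-smoothed orbit -/
theorem aux_smooth (U : ℝ → H ≃ₗᵢ[ℂ] H) (_ : ∀ ξ, U 0 ξ = ξ)
    (U_add : ∀ s t ξ, U (s + t) ξ = U s (U t ξ))
    (U_cont : ∀ ξ, Continuous fun t : ℝ => U t ξ) (ε : ℝ) (hε : ε ≠ 0) (ξ : H) :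
    ∃ f : ℂ → H, Differentiable ℂ f ∧ 
      ∀ t : ℝ, f t = U t (∫ s : ℝ, Real.exp (-1 * s ^ 2) • U (ε * s) ξ) := by
  have hWc : Continuous fun s : ℝ => U (ε * s) ξ := (U_cont ξ).comp (by fun_prop)
  have hWb : ∀ s : ℝ, ‖U (ε * s) ξ‖ ≤ ‖ξ‖ := fun s => by simp
  have hd := aux_gauss_diff _ hWc _ hWb
  refine ⟨fun z => Complex.exp (-(z / ε) ^ 2) • 
    ∫ s : ℝ, Complex.exp (2 * s * (z / ε) - s ^ 2) • U (ε * s) ξ, ?_, ?_⟩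
  · have h2 : Differentiable ℂ fun z : ℂ => z / ε := by fun_prop
    have h3 := hd.comp h2
    have h4 : Differentiable ℂ fun z : ℂ => Complex.exp (-(z / ε) ^ 2) := by fun_prop
    exact h4.smul h3
  · intro t
    beta_reduce
    rw [← integral_smul]
    have h1 : U t (∫ s : ℝ, Real.exp (-1 * s ^ 2) • U (ε * s) ξ) =
        ∫ s : ℝ, U t (Real.exp (-1 * s ^ 2) • U (ε * s) ξ) :=
      ((U t).toContinuousLinearEquiv.toContinuousLinearMap.integral_comp_comm
        (aux_gauss_int _ hWc _ hWb)).symm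
    rw [h1, ← integral_sub_right_eq_self
      (fun s : ℝ => U t (Real.exp (-1 * s ^ 2) • U (ε * s) ξ)) (t / ε)]
    refine integral_congr_ae (Filter.Eventually.of_forall fun s => ?_)
    have h2 : U t (U (ε * (s - t / ε)) ξ) = U (ε * s) ξ := by
      rw [← U_add]; congr 2; field_simp; ring
    have h3 : U t (Real.exp (-1 * (s - t / ε) ^ 2) • U (ε * (s - t / ε)) ξ) = 
       Real.exp (-1 * (s - t / ε) ^ 2) • U t (U (ε * (s - t / ε)) ξ) := by
      rw [← Complex.coe_smul, map_smul, Complex.coe_smul]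
    simp only [h3, h2]
    rw [smul_smul, ← Complex.exp_add, ← Complex.coe_smul, Complex.ofReal_exp]
    congr 2
    push_cast
    ring

theorem aux_approx (U : ℝ → H ≃ₗᵢ[ℂ] H) (U_zero : ∀ ξ, U 0 ξ = ξ)
    (U_cont : ∀ ξ, Continuous fun t : ℝ => U t ξ) (ξ : H) :
    Filter.Tendsto (fun n : ℕ => ∫ s : ℝ, Real.exp (-1 * s ^ 2) • U (1 / ((n : ℝ) + 1) * s) ξ)
      Filter.atTop (nhds (Real.sqrt Real.pi • ξ)) := by
  have h0 : Real.sqrt Real.pi • ξ = ∫ s : ℝ, Real.exp (-1 * s ^ 2) • ξ := by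
    rw [integral_smul_const, integral_gaussian]; simp
  rw [h0]
  refine tendsto_integral_of_dominated_convergence (fun s => Real.exp (-1 * s ^ 2) * ‖ξ‖) ?_ ?_ ?_ ?_
  · intro n
    have : Continuous fun s : ℝ => U (1 / ((n : ℝ) + 1) * s) ξ := (U_cont ξ).comp (by fun_prop)
    exact Continuous.aestronglyMeasurable (by fun_prop)
  · exact (integrable_exp_neg_mul_sq (by norm_num)).mul_const _
  · intro n
    refine Filter.Eventually.of_forall fun s => ?_
    rw [norm_smul, Real.norm_eq_abs, abs_of_pos (Real.exp_pos _), LinearIsometryEquiv.norm_map]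
  · refine Filter.Eventually.of_forall fun s => ?_
    have h1 : Filter.Tendsto (fun n : ℕ => 1 / ((n : ℝ) + 1) * s) Filter.atTop (nhds 0) := by
      simpa using (tendsto_one_div_add_atTop_nhds_zero_nat (𝕜 := ℝ)).mul_const s
    have h2 := ((U_cont ξ).tendsto 0).comp h1
    rw [U_zero] at h2
    exact h2.const_smul _

namespace GradedVN

variable (N : GradedVN H)

theorem aux_U_neg (t : ℝ) (ξ : H) : N.U (-t) (N.U t ξ) = ξ := by
  rw [← N.U_add]; simp [N.U_zero]

theorem aux_U_neg' (t : ℝ) (ξ : H) : N.U t (N.U (-t) ξ) = ξ := by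
  rw [← N.U_add]; simp [N.U_zero]

theorem aux_U_cont {g : ℝ → H} (hg : Continuous g) : Continuous fun s => N.U s (g s) := by
  rw [continuous_iff_continuousAt]
  intro s₀
  have h1 : Filter.Tendsto (fun s => N.U s (g s - g s₀)) (nhds s₀) (nhds 0) := by
    rw [tendsto_zero_iff_norm_tendsto_zero]
    simp only [LinearIsometryEquiv.norm_map]
    rw [← tendsto_zero_iff_norm_tendsto_zero]
    exact tendsto_sub_nhds_zero_iff.2 (hg.tendsto s₀)
  have h2 := h1.add ((N.U_cont (g s₀)).tendsto s₀)
  simp only [map_sub, sub_add_cancel, zero_add] at h2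
  exact h2

theorem aux_inner_U (t : ℝ) (ξ η : H) : ⟪ξ, N.U t η⟫_ℂ = ⟪N.U (-t) ξ, η⟫_ℂ := by
  rw [← LinearIsometryEquiv.inner_map_map (N.U t) (N.U (-t) ξ), aux_U_neg']

theorem aux_mem_M {y : H →L[ℂ] H} (h : ∀ a ∈ N.M.commutant, a * y = y * a) : y ∈ N.M := by
  rw [← VonNeumannAlgebra.commutant_commutant N.M]
  exact VonNeumannAlgebra.mem_commutant_iff.2 h

theorem aux_smooth_op (x : H →L[ℂ] H) (hx : x ∈ N.M) (ε : ℝ) :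
    ∃ y ∈ N.M, ∀ ξ, Integrable (fun s : ℝ =>
        Real.exp (-1 * s ^ 2) • N.U (ε * s) (x (N.U (-(ε * s)) ξ))) ∧
      y ξ = ∫ s : ℝ, Real.exp (-1 * s ^ 2) • N.U (ε * s) (x (N.U (-(ε * s)) ξ)) := by
  have hc : ∀ ξ, Continuous fun s : ℝ => N.U (ε * s) (x (N.U (-(ε * s)) ξ)) := by
    intro ξ
    have h1 : Continuous fun s : ℝ => N.U s (x (N.U (-s) ξ)) :=
      N.aux_U_cont (x.continuous.comp ((N.U_cont ξ).comp continuous_neg))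
    exact h1.comp (by fun_prop : Continuous fun s : ℝ => ε * s)
  have hb : ∀ ξ (s : ℝ), ‖N.U (ε * s) (x (N.U (-(ε * s)) ξ))‖ ≤ ‖x‖ * ‖ξ‖ := by
    intro ξ s
    rw [LinearIsometryEquiv.norm_map]
    refine (x.le_opNorm _).trans ?_
    rw [LinearIsometryEquiv.norm_map]
  have hi : ∀ ξ, Integrable fun s : ℝ =>
      Real.exp (-1 * s ^ 2) • N.U (ε * s) (x (N.U (-(ε * s)) ξ)) :=
    fun ξ => aux_gauss_int _ (hc ξ) _ (hb ξ)
  let L : H →ₗ[ℂ] H :=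
    { toFun := fun ξ => ∫ s : ℝ, Real.exp (-1 * s ^ 2) • N.U (ε * s) (x (N.U (-(ε * s)) ξ))
      map_add' := by
        intro ξ η
        rw [← integral_add (hi ξ) (hi η)]
        simp only [map_add, smul_add]
      map_smul' := by
        intro c ξ
        rw [RingHom.id_apply, ← integral_smul]
        simp only [map_smul, smul_comm c] }
  let y : H →L[ℂ] H := L.mkContinuous ((∫ s : ℝ, Real.exp (-1 * s ^ 2)) * ‖x‖) (by
    intro ξ
    refine (norm_integral_le_of_norm_le (g := fun s : ℝ => Real.exp (-1 * s ^ 2) * (‖x‖ * ‖ξ‖))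
      ((integrable_exp_neg_mul_sq (by norm_num)).mul_const _)
      (Filter.Eventually.of_forall fun s => ?_)).trans ?_
    · rw [norm_smul, Real.norm_eq_abs, abs_of_pos (Real.exp_pos _)]
      gcongr
      exact hb ξ s
    · rw [integral_mul_const, mul_assoc])
  have hy : ∀ ξ, y ξ = ∫ s : ℝ, Real.exp (-1 * s ^ 2) • N.U (ε * s) (x (N.U (-(ε * s)) ξ)) :=
    fun ξ => rfl
  refine ⟨y, N.aux_mem_M fun a ha => ?_, fun ξ => ⟨hi ξ, hy ξ⟩⟩
  ext ξ
  show a (y ξ) = y (a ξ)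
  rw [hy, hy, ← a.integral_comp_comm (hi ξ)]
  refine integral_congr_ae (Filter.Eventually.of_forall fun s => ?_)
  obtain ⟨b, hbM, hb'⟩ := N.flow_mem (ε * s) x hx
  have h1 := VonNeumannAlgebra.mem_commutant_iff.1 ha b hbM
  have h2 : b (a ξ) = a (b ξ) := congrArg (fun T : H →L[ℂ] H => T ξ) h1
  beta_reduce
  rw [← hb', ← hb', h2, ← Complex.coe_smul, ← Complex.coe_smul, map_smul]

theorem aux_inner_star (a : H →L[ℂ] H) (ξ η : H) : ⟪star a ξ, η⟫_ℂ = ⟪ξ, a η⟫_ℂ := by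
  rw [ContinuousLinearMap.star_eq_adjoint, ContinuousLinearMap.adjoint_inner_left]

theorem aux_inner_star' (a : H →L[ℂ] H) (ξ η : H) : ⟪ξ, star a η⟫_ℂ = ⟪a ξ, η⟫_ℂ := by
  rw [ContinuousLinearMap.star_eq_adjoint, ContinuousLinearMap.adjoint_inner_right]

theorem aux_centralizer_star {y : H →L[ℂ] H} (hy : y ∈ N.centralizerSet) (a : H →L[ℂ] H)
    (ha : a ∈ N.M) : ⟪y N.Ω, a N.Ω⟫_ℂ = ⟪star a N.Ω, star y N.Ω⟫_ℂ := by
  have h := hy.2 (star a) (star_mem ha)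
  rw [← aux_inner_star y, aux_inner_star' a _ (y N.Ω)] at h
  have h2 := congrArg (starRingEnd ℂ) h
  rw [inner_conj_symm, inner_conj_symm] at h2
  exact h2.symm

/-- analytic elements of the centralizer are invariant -/
theorem aux_analytic_inv {y : H →L[ℂ] H} (hy : y ∈ N.centralizerSet) (f : ℂ → H)
    (hf : Differentiable ℂ f) (hfU : ∀ t : ℝ, f t = N.U t (y N.Ω)) (t : ℝ) :
    N.U t (y N.Ω) = y N.Ω := by
  have h0 : f 0 = y N.Ω := by
    have := hfU 0
    rwa [N.U_zero, Complex.ofReal_zero] at this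
  rw [← h0]
  refine aux_liouville N.U N.U_zero N.U_add f hf (fun t => by rw [hfU, h0]) ?_ t
  intro r
  obtain ⟨a, haM, ha⟩ := N.flow_mem r y hy.1
  have haΩ : a N.Ω = N.U r (y N.Ω) := by rw [ha, N.U_Ω]
  have h1 : N.J (f (-Complex.I / 2)) = star y N.Ω := N.S_cond y hy.1 f hf hfU
  have h2 : N.J (f (-Complex.I / 2 + r)) = star a N.Ω := by
    refine N.S_cond a haM (fun z => f (z + r)) (by fun_prop) fun s => ?_
    rw [haΩ, ← N.U_add, ← hfU]
    simp
  rw [h0, hfU r, ← haΩ, N.aux_centralizer_star hy a haM, ← h1, ← h2, N.J_inner, add_comm]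

theorem aux_centralizer_inv {x : H →L[ℂ] H} (hx : x ∈ N.centralizerSet) (t : ℝ) :
    N.U t (x N.Ω) = x N.Ω := by
  have key : ∀ ε : ℝ, ε ≠ 0 → N.U t (∫ s : ℝ, Real.exp (-1 * s ^ 2) • N.U (ε * s) (x N.Ω)) =
      ∫ s : ℝ, Real.exp (-1 * s ^ 2) • N.U (ε * s) (x N.Ω) := by
    intro ε hε
    obtain ⟨y, hyM, hy⟩ := N.aux_smooth_op x hx.1 ε
    have hyΩ : y N.Ω = ∫ s : ℝ, Real.exp (-1 * s ^ 2) • N.U (ε * s) (x N.Ω) := by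
      rw [(hy N.Ω).2]
      simp only [N.U_Ω]
    obtain ⟨f, hf, hfU⟩ := aux_smooth N.U N.U_zero N.U_add N.U_cont ε hε (x N.Ω)
    rw [← hyΩ] at hfU ⊢
    refine N.aux_analytic_inv ⟨hyM, fun a ha => ?_⟩ f hf hfU t
    have e1 : ⟪N.Ω, y (a N.Ω)⟫_ℂ = ∫ s : ℝ, ⟪N.Ω, Real.exp (-1 * s ^ 2) •
        N.U (ε * s) (x (N.U (-(ε * s)) (a N.Ω)))⟫_ℂ := by
      rw [(hy _).2]
      exact ((innerSL ℂ N.Ω).integral_comp_comm (hy _).1).symm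
    have e2 : ⟪N.Ω, a (y N.Ω)⟫_ℂ = ∫ s : ℝ, ⟪N.Ω, a (Real.exp (-1 * s ^ 2) •
        N.U (ε * s) (x (N.U (-(ε * s)) N.Ω)))⟫_ℂ := by
      rw [(hy _).2]
      exact (((innerSL ℂ N.Ω).comp a).integral_comp_comm (hy _).1).symm
    rw [e1, e2]
    refine integral_congr_ae (Filter.Eventually.of_forall fun s => ?_)
    beta_reduce
    rw [← Complex.coe_smul, ← Complex.coe_smul, map_smul, inner_smul_right, inner_smul_right]
    congr 1
    obtain ⟨b, hbM, hb⟩ := N.flow_mem (-(ε * s)) a ha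
    have hbΩ : b N.Ω = N.U (-(ε * s)) (a N.Ω) := by rw [hb, N.U_Ω]
    rw [aux_inner_U, N.U_Ω, ← hbΩ, hx.2 b hbM, hb, aux_inner_U, neg_neg, N.U_Ω]
  have hlim := aux_approx N.U N.U_zero N.U_cont (x N.Ω)
  have hlim2 := ((N.U t).continuous.tendsto _).comp hlim
  have h3 := tendsto_nhds_unique hlim2 (hlim.congr fun n => (key _ (by positivity)).symm)
  rw [← Complex.coe_smul, map_smul] at h3
  have h4 : ((Real.sqrt Real.pi : ℝ) : ℂ) ≠ 0 :=
    Complex.ofReal_ne_zero.2 (Real.sqrt_pos.2 Real.pi_pos).ne'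
  exact smul_right_injective H h4 h3

theorem aux_centralizer_J {x : H →L[ℂ] H} (hx : x ∈ N.centralizerSet) :
    N.J (x N.Ω) = star x N.Ω :=
  N.S_cond x hx.1 (fun _ => x N.Ω) (differentiable_const _)
    fun t => (N.aux_centralizer_inv hx t).symm

/-- `J` as a conjugate linear continuous map -/
def auxJ : H →L⋆[ℂ] H :=
  LinearMap.mkContinuous
    { toFun := N.J, map_add' := N.J_add, map_smul' := N.J_smul } 1 (by
      intro ξ
      have h : ‖N.J ξ‖ ^ 2 = ‖ξ‖ ^ 2 := by
        have := N.J_inner ξ ξ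
        rw [inner_self_eq_norm_sq_to_K, inner_self_eq_norm_sq_to_K] at this
        exact_mod_cast this
      rw [one_mul]
      exact (pow_le_pow_iff_left₀ (norm_nonneg _) (norm_nonneg _) two_ne_zero).1 h.le)

/-- `J a J` -/
def auxC (a : H →L[ℂ] H) : H →L[ℂ] H := N.auxJ.comp (a.comp N.auxJ)

theorem auxC_apply (a : H →L[ℂ] H) (ξ : H) : N.auxC a ξ = N.J (a (N.J ξ)) := rfl

theorem auxC_mul (a b : H →L[ℂ] H) : N.auxC (a * b) = N.auxC a * N.auxC b := by
  ext ξ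
  show N.J (a (b (N.J ξ))) = N.J (a (N.J (N.J (b (N.J ξ)))))
  rw [N.J_invol]

theorem aux_J_inner' (ξ η : H) : ⟪N.J ξ, η⟫_ℂ = ⟪N.J η, ξ⟫_ℂ := by
  rw [← N.J_invol η, N.J_inner, N.J_invol]

theorem auxC_star (a : H →L[ℂ] H) : star (N.auxC a) = N.auxC (star a) := by
  refine ContinuousLinearMap.ext fun ξ => ext_inner_right ℂ fun η => ?_
  rw [aux_inner_star, auxC_apply, auxC_apply, aux_J_inner', aux_inner_star', ← N.J_invol ξ,
    N.J_inner, N.J_invol]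

theorem auxC_comm (a : H →L[ℂ] H) (ha : a ∈ N.M) (y : H →L[ℂ] H) (hy : y ∈ N.M) :
    N.auxC a * y = y * N.auxC a := by
  ext ξ
  exact N.tomita a ha y hy ξ

theorem aux_sqrt_unique (a b : H →L[ℂ] H) (ha : a.IsPositive) (hb : b.IsPositive)
    (h : a * a = b * b) : a = b := by
  rw [← ContinuousLinearMap.nonneg_iff_isPositive] at ha hb
  exact (CFC.mul_self_eq_mul_self_iff a b ha hb).1 h

theorem aux_sqrt_comm (m b : H →L[ℂ] H) (hm : m.IsPositive) (h : Commute (m * m) b) :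
    Commute m b := by
  rw [← ContinuousLinearMap.nonneg_iff_isPositive] at hm
  rw [← CFC.sqrt_mul_self m hm]
  exact h.cfcₙ_nnreal _

theorem aux_ext_ker (m A B : H →L[ℂ] H) (hm : star m = m) (h1 : A * m = B * m)
    (h2 : ∀ ξ, m ξ = 0 → A ξ = B ξ) : A = B := by
  let K : Submodule ℂ H := LinearMap.ker ((A - B : H →L[ℂ] H) : H →ₗ[ℂ] H)
  have hK : ∀ ξ, ξ ∈ K ↔ A ξ = B ξ := fun ξ => by
    show (A - B) ξ = 0 ↔ _
    rw [sub_apply, sub_eq_zero]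
  have hKc : IsClosed (K : Set H) := (A - B).isClosed_ker
  have : CompleteSpace K := hKc.completeSpace_coe
  have h3 : Kᗮ = ⊥ := by
    rw [Submodule.eq_bot_iff]
    intro η hη
    have h4 : m η = 0 := by
      refine ext_inner_right ℂ fun ζ => ?_
      rw [← hm, aux_inner_star, inner_zero_left]
      refine Submodule.inner_left_of_mem_orthogonal (K := K) ?_ hη
      rw [hK]
      exact congrArg (fun T : H →L[ℂ] H => T ζ) h1
    have h5 : η ∈ K := (hK η).2 (h2 η h4)
    exact inner_self_eq_zero.1 (Submodule.inner_left_of_mem_orthogonal h5 hη)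
  rw [Submodule.orthogonal_eq_bot_iff] at h3
  ext ξ
  rw [← hK, h3]
  trivial


theorem aux_VV : N.V * N.V = 1 := by
  ext ξ
  exact N.V_invol ξ

theorem aux_tc_iff (x : H →L[ℂ] H) :
    x ∈ N.twistedCenter ↔ x ∈ N.M ∧ N.auxC (star x) = x * N.V := by
  constructor
  · exact fun h => ⟨h.1, ContinuousLinearMap.ext h.2⟩
  · exact fun h => ⟨h.1, fun ξ => congrArg (fun T : H →L[ℂ] H => T ξ) h.2⟩

theorem aux_tc_fixed {x : H →L[ℂ] H} (hx : x ∈ N.twistedCenter) : x * N.V = N.V * x := by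
  have hC := ((N.aux_tc_iff x).1 hx).2
  have hC' : N.auxC x = N.V * star x := by
    have := congrArg star hC
    rwa [auxC_star, star_star, star_mul, N.V_star] at this
  have h1 : N.J (star x N.Ω) = x N.Ω := by
    have := hx.2 N.Ω
    rwa [N.J_Ω, N.V_Ω] at this
  have h2 : N.J (x N.Ω) = N.V (star x N.Ω) := by
    have := congrArg (fun T : H →L[ℂ] H => T N.Ω) hC'
    simp only [auxC_apply, N.J_Ω] at this
    exact this
  have h3 : star x N.Ω = N.V (star x N.Ω) := by
    rw [← h2, ← h1, N.J_invol]
  obtain ⟨y, hyM, hy⟩ := N.V_mem (star x) (star_mem hx.1)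
  have h4 : y - star x = 0 := by
    refine N.separating _ (sub_mem hyM (star_mem hx.1)) ?_
    rw [sub_apply, hy, N.V_Ω, ← h3, sub_self]
  have h5 : star x = N.V * star x * N.V := by
    refine (sub_eq_zero.1 h4).symm.trans ?_
    ext ξ
    exact hy ξ
  have h6 := congrArg star h5
  rw [star_star, star_mul, star_mul, star_star, N.V_star] at h6
  calc x * N.V = (N.V * (x * N.V)) * N.V := by rw [← h6]
    _ = N.V * x * (N.V * N.V) := by noncomm_ring
    _ = N.V * x := by rw [aux_VV, mul_one]

theorem aux_tc_comm {x : H →L[ℂ] H} (hx : x ∈ N.twistedCenter) (y : H →L[ℂ] H) (hy : y ∈ N.M) :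
    x * N.V * y = y * (x * N.V) := by
  rw [← ((N.aux_tc_iff x).1 hx).2]
  exact N.auxC_comm _ (star_mem hx.1) y hy

theorem aux_part1 (x : H →L[ℂ] H) (hx : x ∈ N.twistedCenter) (u m : H →L[ℂ] H)
    (hm : m.IsPositive) (hmm : m * m = star x * x) (hxu : x = u * m)
    (hu : ∀ ξ, m ξ = 0 → u ξ = 0) :
    u ∈ N.twistedCenter ∧ m ∈ N.centerSet ∩ N.gammaFixed := by
  have hVV := N.aux_VV
  have hC := ((N.aux_tc_iff x).1 hx).2
  have hC' : N.auxC x = N.V * star x := by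
    have := congrArg star hC
    rwa [auxC_star, star_star, star_mul, N.V_star] at this
  have hxV := N.aux_tc_fixed hx
  have hxV' : star x * N.V = N.V * star x := by
    have := congrArg star hxV
    rw [star_mul, star_mul, N.V_star] at this
    exact this.symm
  have hnorm : x * star x = star x * x := by
    have h1 := N.aux_tc_comm hx (star x) (star_mem hx.1)
    calc x * star x = x * star x * (N.V * N.V) := by rw [hVV, mul_one]
      _ = x * (star x * N.V) * N.V := by noncomm_ring
      _ = (x * N.V * star x) * N.V := by rw [hxV', ← mul_assoc x]
      _ = star x * x * (N.V * N.V) := by rw [h1]; noncomm_ring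
      _ = star x * x := by rw [hVV, mul_one]
  have hPM : star x * x ∈ N.M := mul_mem (star_mem hx.1) hx.1
  have hPV : star x * x * N.V = N.V * (star x * x) := by
    rw [mul_assoc, hxV, ← mul_assoc, hxV', mul_assoc]
  have hPy : ∀ y ∈ N.M, star x * x * y = y * (star x * x) := by
    intro y hy
    have h1 := N.aux_tc_comm hx y hy
    have h2 := congrArg star (N.aux_tc_comm hx (star y) (star_mem hy))
    simp only [star_mul, star_star, N.V_star] at h2
    have h3 : N.V * star x * (x * N.V) = star x * x := by
      rw [← hxV', mul_assoc, ← mul_assoc N.V, ← hxV, mul_assoc x, hVV, mul_one]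
    calc star x * x * y = N.V * star x * (x * N.V * y) := by rw [← h3]; noncomm_ring
      _ = N.V * star x * y * (x * N.V) := by rw [h1]; noncomm_ring
      _ = y * (N.V * star x * (x * N.V)) := by rw [← h2]; noncomm_ring
      _ = y * (star x * x) := by rw [h3]
  have hmy : ∀ y ∈ N.M, m * y = y * m := fun y hy =>
    aux_sqrt_comm m y hm (by rw [hmm]; exact hPy y hy)
  have hma : ∀ a ∈ N.M.commutant, a * m = m * a := fun a ha =>
    (aux_sqrt_comm m a hm (by
      rw [hmm]; exact VonNeumannAlgebra.mem_commutant_iff.1 ha _ hPM)).symm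
  have hmM : m ∈ N.M := N.aux_mem_M hma
  have hmV : m * N.V = N.V * m := aux_sqrt_comm m N.V hm (by rw [hmm]; exact hPV)
  have hmstar : star m = m := ((ContinuousLinearMap.isPositive_iff' m).1 hm).1
  have hCm : N.auxC m = m := by
    refine aux_sqrt_unique _ _ ?_ hm ?_
    · rw [ContinuousLinearMap.isPositive_iff']
      refine ⟨?_, fun ξ => ?_⟩
      · show star (N.auxC m) = N.auxC m
        rw [auxC_star, hmstar]
      · rw [auxC_apply, aux_J_inner', ← aux_inner_star, hmstar]
        exact ((ContinuousLinearMap.isPositive_iff' m).1 hm).2 _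
    · rw [← auxC_mul, hmm, auxC_mul, hC, hC', mul_assoc, ← mul_assoc N.V, hVV, one_mul, hnorm]
  have huM : u ∈ N.M := by
    refine N.aux_mem_M fun a ha => aux_ext_ker m _ _ hmstar ?_ fun ξ hξ => ?_
    · rw [mul_assoc, ← hxu, mul_assoc, hma a ha, ← mul_assoc, ← hxu]
      exact (VonNeumannAlgebra.mem_commutant_iff.1 ha x hx.1).symm
    · have h1 : m (a ξ) = a (m ξ) := congrArg (fun T : H →L[ℂ] H => T ξ) (hma a ha).symm
      show a (u ξ) = u (a ξ)
      rw [hu _ hξ, hu _ (by rw [h1, hξ, map_zero]), map_zero]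
  have hus : ∀ ξ, m ξ = 0 → star u ξ = 0 := by
    intro ξ hξ
    have h1 : m (star u ξ) = star u (m ξ) :=
      congrArg (fun T : H →L[ℂ] H => T ξ) (hmy _ (star_mem huM))
    rw [hξ, map_zero] at h1
    rw [← inner_self_eq_zero (𝕜 := ℂ), aux_inner_star, hu _ h1, inner_zero_right]
  refine ⟨(N.aux_tc_iff u).2 ⟨huM, ?_⟩, ⟨hmM, hmy⟩, hmM, fun ξ => ?_⟩
  · refine aux_ext_ker m _ _ hmstar ?_ fun ξ hξ => ?_
    · have h1 : star u * m = star x := by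
        rw [hxu, star_mul, hmstar, hmy _ (star_mem huM)]
      calc N.auxC (star u) * m = N.auxC (star u * m) := by rw [auxC_mul, hCm]
        _ = u * m * N.V := by rw [h1, hC, ← hxu]
        _ = u * N.V * m := by rw [mul_assoc, hmV, mul_assoc]
    · have h1 : m (N.V ξ) = 0 := by
        have : m (N.V ξ) = N.V (m ξ) := congrArg (fun T : H →L[ℂ] H => T ξ) hmV
        rw [this, hξ, map_zero]
      have h2 : m (N.J ξ) = 0 := by
        have h3 : N.J (m (N.J ξ)) = m ξ := congrArg (fun T : H →L[ℂ] H => T ξ) hCm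
        have h4 : N.J 0 = 0 := N.auxJ.map_zero
        rw [← N.J_invol (m (N.J ξ)), h3, hξ, h4]
      have h4 : N.J 0 = 0 := N.auxJ.map_zero
      show N.J (star u (N.J ξ)) = u (N.V ξ)
      rw [hus _ h2, hu _ h1, h4]
  · have : m (N.V ξ) = N.V (m ξ) := congrArg (fun T : H →L[ℂ] H => T ξ) hmV
    rw [this, N.V_invol]

theorem aux_part2 (u : H →L[ℂ] H) (huM : u ∈ N.M) (hu1 : star u * u = 1) (hu2 : u * star u = 1)
    (hin : ∀ y ∈ N.M, N.V * y * N.V = u * y * star u) :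
    N.twistedCenter = (fun z => u * z) '' N.centerSet := by
  have hVV := N.aux_VV
  have hVu : N.V * u = u * N.V := by
    have h1 := hin u huM
    rw [mul_assoc u, hu2, mul_one] at h1
    calc N.V * u = N.V * u * (N.V * N.V) := by rw [hVV, mul_one]
      _ = N.V * u * N.V * N.V := by noncomm_ring
      _ = u * N.V := by rw [h1]
  have hVy : ∀ y ∈ N.M, N.V * y = u * y * star u * N.V := by
    intro y hy
    rw [← hin y hy, mul_assoc _ N.V N.V, hVV, mul_one]
  have hyV : ∀ y ∈ N.M, u * N.V * y = y * (u * N.V) := by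
    intro y hy
    have h1 : N.V * (u * y * star u) = y * N.V := by
      rw [← hin y hy]
      calc N.V * (N.V * y * N.V) = (N.V * N.V) * y * N.V := by noncomm_ring
        _ = y * N.V := by rw [hVV, one_mul]
    calc u * N.V * y = N.V * (u * y * star u) * u := by
          rw [← hVu, mul_assoc N.V, mul_assoc, mul_assoc _ (star u), hu1, mul_one]
      _ = y * (u * N.V) := by rw [h1, mul_assoc, hVu]
  have hyV' : ∀ y ∈ N.M, star u * N.V * y = y * (star u * N.V) := by
    intro y hy
    have hVs : star u * N.V = N.V * star u := by
      have := congrArg star hVu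
      simpa only [star_mul, N.V_star] using this
    calc star u * N.V * y = star u * (N.V * y) := by rw [mul_assoc]
      _ = (star u * u) * y * (star u * N.V) := by rw [hVy y hy]; noncomm_ring
      _ = _ := by rw [hu1, one_mul]
  ext x
  constructor
  · intro hx
    refine ⟨star u * x, ⟨mul_mem (star_mem huM) hx.1, fun y hy => ?_⟩, ?_⟩
    · have h1 := N.aux_tc_comm hx y hy
      have h2 := N.aux_tc_fixed hx
      have h3 : star u * x = star u * N.V * (x * N.V) := by
        rw [h2, mul_assoc, ← mul_assoc N.V, hVV, one_mul]
      rw [h3, mul_assoc, h1, ← mul_assoc, hyV' y hy, mul_assoc, mul_assoc]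
    · show u * (star u * x) = x
      rw [← mul_assoc, hu2, one_mul]
  · rintro ⟨z, ⟨hzM, hz⟩, rfl⟩
    show u * z ∈ N.twistedCenter
    have hwM : u * z ∈ N.M := mul_mem huM hzM
    have hzV : ∀ y ∈ N.M, u * z * N.V * y = y * (u * z * N.V) := by
      intro y hy
      have h1 : u * z * N.V = (u * N.V) * (N.V * z * N.V) := by
        calc u * z * N.V = u * (1 * (z * N.V)) := by rw [one_mul, mul_assoc]
          _ = _ := by rw [← hVV]; noncomm_ring
      have h2 : N.V * z * N.V = z := by rw [hin z hzM, ← hz u huM, mul_assoc, hu2, mul_one]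
      rw [h1, h2, mul_assoc, hz y hy, ← mul_assoc, hyV y hy, mul_assoc]
    have hcen : u * z ∈ N.centralizerSet := by
      refine ⟨hwM, fun y hy => ?_⟩
      obtain ⟨y', hyM', hy'⟩ := N.V_mem y hy
      have h1 : (u * z) (N.V (y' N.Ω)) = y' ((u * z) (N.V N.Ω)) :=
        congrArg (fun T : H →L[ℂ] H => T N.Ω) (hzV y' hyM')
      have h2 : N.V ((u * z) N.Ω) = (u * z) N.Ω := by
        have h3 : N.V * (u * z) = u * z * N.V := by
          rw [hVy _ hwM]
          congr 1
          rw [mul_assoc, mul_assoc, hz _ (star_mem huM), ← mul_assoc u (star u), hu2, one_mul]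
        have h4 : N.V ((u * z) N.Ω) = (u * z) (N.V N.Ω) :=
          congrArg (fun T : H →L[ℂ] H => T N.Ω) h3
        rw [h4, N.V_Ω]
      rw [hy', hy', N.V_Ω, N.V_invol, h2] at h1
      rw [h1, ← aux_inner_star, N.V_star, N.V_Ω]
    have hcen' : star (u * z) ∈ N.centralizerSet := by
      refine ⟨star_mem hwM, fun y hy => ?_⟩
      have h1 := hcen.2 (star y) (star_mem hy)
      rw [← aux_inner_star (u * z), aux_inner_star' y _ ((u * z) N.Ω)] at h1
      rw [aux_inner_star', ← aux_inner_star y N.Ω]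
      have h2 := congrArg (starRingEnd ℂ) h1
      rw [inner_conj_symm, inner_conj_symm] at h2
      exact h2.symm
    refine (N.aux_tc_iff _).2 ⟨hwM, ?_⟩
    have hJ := N.aux_centralizer_J hcen'
    rw [star_star] at hJ
    refine ContinuousLinearMap.ext fun ξ => ?_
    refine congrFun (Continuous.ext_on N.cyclic (ContinuousLinearMap.continuous _)
      (ContinuousLinearMap.continuous _) ?_) ξ
    rintro _ ⟨y, hy, rfl⟩
    have e1 := congrArg (fun T : H →L[ℂ] H => T N.Ω)
      (N.auxC_comm (star (u * z)) (star_mem hwM) y hy)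
    have e2 := congrArg (fun T : H →L[ℂ] H => T N.Ω) (hzV y hy)
    refine (e1.trans ?_).trans e2.symm
    show y (N.J (star (u * z) (N.J N.Ω))) = y ((u * z) (N.V N.Ω))
    rw [N.J_Ω, N.V_Ω, hJ]

end GradedVN

end AuxMeasure

/-- (i) If `x ∈ Z(M, V)` has polar decomposition `x = u |x|` (characterized
by `|x|` positive with `|x|² = x* x`, `x = u |x|` and `u` vanishing on `ker |x|`), then
`u ∈ Z(M, V)` and `|x| ∈ Z(M)^γ`. (ii) If `Ad_V` is inner on `M`, implemented by a
unitary `u ∈ M`, then `Z(M, V) = u · Z(M)`. -/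
theorem twisted_center_polar_and_inner {H : Type*} [NormedAddCommGroup H]
    [InnerProductSpace ℂ H] [CompleteSpace H] (N : GradedVN H) :
    (∀ x ∈ N.twistedCenter, ∀ u m : H →L[ℂ] H,
      m.IsPositive → m * m = star x * x → x = u * m → (∀ ξ, m ξ = 0 → u ξ = 0) →
      u ∈ N.twistedCenter ∧ m ∈ N.centerSet ∩ N.gammaFixed) ∧
    (∀ u : H →L[ℂ] H, u ∈ N.M → star u * u = 1 → u * star u = 1 →
      (∀ y ∈ N.M, N.V * y * N.V = u * y * star u) →
      N.twistedCenter = (fun z => u * z) '' N.centerSet) := by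
  exact ⟨fun x hx u m hm hmm hxu hu => N.aux_part1 x hx u m hm hmm hxu hu,
    fun u huM h1 h2 hin => N.aux_part2 u huM h1 h2 hin⟩

end
end

section
/- Let (M, Ω, V) be a graded von Neumann algebra with M a factor. Then the V-twisted center Z(M, V) is at most one-dimensional as a complex vector space: either Z(M, V) = {0}, or there is a unitary u ∈ Z(M, V) with Z(M, V) = ℂ·u. -/
open scoped InnerProductSpace ComplexOrder

noncomputable section

variable {H : Type*} [NormedAddCommGroup H] [InnerProductSpace ℂ H] [CompleteSpace H]

theorem tc_comm (N : GradedVN H) {x : H →L[ℂ] H} (hx : x ∈ N.twistedCenter) {y : H →L[ℂ] H}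
    (hy : y ∈ N.M) : x * N.V * y = y * x * N.V := by
  ext ξ
  have h := N.tomita (star x) (star_mem hx.1) y hy ξ
  rw [hx.2, hx.2] at h
  exact h

theorem V_sq (N : GradedVN H) : N.V * N.V = 1 := by
  ext ξ
  exact N.V_invol ξ

theorem VyV_mem (N : GradedVN H) {y : H →L[ℂ] H} (hy : y ∈ N.M) : N.V * y * N.V ∈ N.M := by
  obtain ⟨z, hz, h⟩ := N.V_mem y hy
  have : N.V * y * N.V = z := by
    ext ξ
    exact (h ξ).symm
  rw [this]; exact hz

theorem tc_comm' (N : GradedVN H) {x : H →L[ℂ] H} (hx : x ∈ N.twistedCenter) {y : H →L[ℂ] H}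
    (hy : y ∈ N.M) : x * (N.V * y * N.V) = y * x := by
  have h := tc_comm N hx hy
  calc x * (N.V * y * N.V) = (x * N.V * y) * N.V := by simp only [mul_assoc]
    _ = y * x * (N.V * N.V) := by rw [h]; simp only [mul_assoc]
    _ = y * x := by rw [V_sq, mul_one]

theorem tc_comm_star (N : GradedVN H) {x : H →L[ℂ] H} (hx : x ∈ N.twistedCenter)
    {y : H →L[ℂ] H} (hy : y ∈ N.M) : (N.V * y * N.V) * star x = star x * y := by
  have h := congrArg star (tc_comm' N hx (star_mem hy))
  simpa [star_mul, N.V_star, mul_assoc] using h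

theorem tc_central1 (N : GradedVN H) {x z : H →L[ℂ] H} (hx : x ∈ N.twistedCenter)
    (hz : z ∈ N.twistedCenter) : x * star z ∈ N.centerSet := by
  refine ⟨mul_mem hx.1 (star_mem hz.1), fun y hy => ?_⟩
  rw [mul_assoc, ← tc_comm_star N hz hy, ← mul_assoc, tc_comm' N hx hy, mul_assoc]

theorem tc_central2 (N : GradedVN H) {x z : H →L[ℂ] H} (hx : x ∈ N.twistedCenter)
    (hz : z ∈ N.twistedCenter) : star z * x ∈ N.centerSet := by
  refine ⟨mul_mem (star_mem hz.1) hx.1, fun y hy => ?_⟩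
  have hy' := VyV_mem N hy
  have e : N.V * (N.V * y * N.V) * N.V = y := by
    calc N.V * (N.V * y * N.V) * N.V = (N.V * N.V) * y * (N.V * N.V) := by
          simp only [mul_assoc]
      _ = y := by rw [V_sq, one_mul, mul_one]
  have h1 := tc_comm' N hx hy'
  have h2 := tc_comm_star N hz hy'
  rw [e] at h1 h2
  rw [mul_assoc, h1, ← mul_assoc, ← h2, mul_assoc]

theorem J_zero' (N : GradedVN H) : N.J 0 = 0 := by
  have := N.J_smul 0 0
  simpa using this

theorem tc_smul (N : GradedVN H) {x : H →L[ℂ] H} (hx : x ∈ N.twistedCenter) (c : ℂ) :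
    c • x ∈ N.twistedCenter := by
  refine ⟨N.M.toStarSubalgebra.smul_mem hx.1 c, fun ξ => ?_⟩
  rw [star_smul, ContinuousLinearMap.smul_apply, N.J_smul, hx.2]
  simp

/-- If `M` is a factor, the twisted center `Z(M, V)` is at most
one-dimensional: either `Z(M, V) = {0}`, or there is a unitary `u ∈ Z(M, V)` with
`Z(M, V) = ℂ · u`. -/
theorem twisted_center_of_factor {H : Type*} [NormedAddCommGroup H]
    [InnerProductSpace ℂ H] [CompleteSpace H] (N : GradedVN H)
    (hfactor : ∀ z ∈ N.centerSet, ∃ c : ℂ, z = c • (1 : H →L[ℂ] H)) :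
    N.twistedCenter = {0} ∨
      ∃ u ∈ N.twistedCenter, star u * u = 1 ∧ u * star u = 1 ∧
        N.twistedCenter = {x : H →L[ℂ] H | ∃ c : ℂ, x = c • u} := by
  by_cases hz : ∀ x ∈ N.twistedCenter, x = 0
  · left
    ext x
    refine ⟨fun h => hz x h, fun h => ?_⟩
    rw [Set.mem_singleton_iff] at h
    subst h
    refine ⟨zero_mem _, fun ξ => ?_⟩
    simp [J_zero' N]
  · right
    push Not at hz
    obtain ⟨x, hx, hx0⟩ := hz
    obtain ⟨c, hc⟩ := hfactor _ (tc_central2 N hx hx)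
    obtain ⟨d, hd⟩ := hfactor _ (tc_central1 N hx hx)
    have hcd : c = d := by
      have h : x * (star x * x) = (x * star x) * x := (mul_assoc _ _ _).symm
      rw [hc, hd, mul_smul_comm, smul_mul_assoc, mul_one, one_mul] at h
      exact smul_left_injective ℂ hx0 h
    subst hcd
    obtain ⟨ξ, hξ⟩ : ∃ ξ, x ξ ≠ 0 := by
      by_contra! h
      exact hx0 (ContinuousLinearMap.ext h)
    have hξ0 : ξ ≠ 0 := by
      rintro rfl
      exact hξ (map_zero x)
    have hin : ((‖x ξ‖ ^ 2 : ℝ) : ℂ) = c * ((‖ξ‖ ^ 2 : ℝ) : ℂ) := by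
      have h1 : ⟪ξ, (star x * x) ξ⟫_ℂ = ⟪x ξ, x ξ⟫_ℂ := by
        rw [ContinuousLinearMap.star_eq_adjoint]
        exact ContinuousLinearMap.adjoint_inner_right x ξ (x ξ)
      rw [hc] at h1
      simp only [ContinuousLinearMap.smul_apply, ContinuousLinearMap.one_apply,
        inner_smul_right, inner_self_eq_norm_sq_to_K] at h1
      push_cast
      exact h1.symm
    have hn1 : 0 < ‖x ξ‖ := norm_pos_iff.mpr hξ
    have hn2 : 0 < ‖ξ‖ := norm_pos_iff.mpr hξ0
    set r : ℝ := ‖x ξ‖ / ‖ξ‖ with hr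
    have hrpos : 0 < r := div_pos hn1 hn2
    have hcr : c = (r : ℂ) * (r : ℂ) := by
      have hn2' : (‖ξ‖ : ℂ) ≠ 0 := by exact_mod_cast hn2.ne'
      rw [hr]
      push_cast at hin ⊢
      field_simp
      exact hin.symm
    have hr0 : (r : ℂ) ≠ 0 := by exact_mod_cast hrpos.ne'
    have hs : star ((r : ℂ)⁻¹) = (r : ℂ)⁻¹ := by
      simp
    have hone : (r : ℂ)⁻¹ * (r : ℂ)⁻¹ * c = 1 := by
      rw [hcr]; field_simp
    have hu := tc_smul N hx ((r : ℂ)⁻¹)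
    have hu1 : star ((r : ℂ)⁻¹ • x) * ((r : ℂ)⁻¹ • x) = 1 := by
      rw [star_smul, hs, smul_mul_assoc, mul_smul_comm, hc, smul_smul, smul_smul, hone,
        one_smul]
    have hu2 : ((r : ℂ)⁻¹ • x) * star ((r : ℂ)⁻¹ • x) = 1 := by
      rw [star_smul, hs, smul_mul_assoc, mul_smul_comm, hd, smul_smul, smul_smul, hone,
        one_smul]
    refine ⟨(r : ℂ)⁻¹ • x, hu, hu1, hu2, ?_⟩
    ext w
    constructor
    · intro hw
      obtain ⟨e, he⟩ := hfactor _ (tc_central1 N hw hu)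
      refine ⟨e, ?_⟩
      have := congrArg (· * ((r : ℂ)⁻¹ • x)) he
      simp only [mul_assoc, hu1, mul_one] at this
      rw [this, smul_mul_assoc, one_mul]
    · rintro ⟨e, rfl⟩
      exact tc_smul N hu e

end
end
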